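/- arXiv:1109.2251 — 2 statements merged into one kernel-verified Lean document; each statement's English description precedes it below -/
import Mathlib

section
/- Let K be a cubic number field (a number field of degree 3 over ℚ) whose discriminant d is a fundamental discriminant, and let g = gcd(3, d). Then for all algebraic integers x, y of K with Tr_{K/ℚ}(x) = 0 and Tr_{K/ℚ}(y) = 0, the integer g divides Tr_{K/ℚ}(x·y). -/
/-- An integer `d` is a fundamental discriminant if `d ≠ 1` and either
`d ≡ 1 (mod 4)` and `d` is squarefree, or `d ≡ 0 (mod 4)`, `d/4` is squarefree,
and `d/4 ≡ 2` or `3 (mod 4)`. -/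
def IsFundamentalDiscriminant (d : ℤ) : Prop :=
  d ≠ 1 ∧
    ((d % 4 = 1 ∧ Squarefree d) ∨
      (d % 4 = 0 ∧ Squarefree (d / 4) ∧ (d / 4 % 4 = 2 ∨ d / 4 % 4 = 3)))

/-!
Let `x` have trace zero in a cubic algebra. Since `1` has trace `3`, the discriminant of
`1, x, x ^ 2` is congruent to `-(tr (x ^ 2)) ^ 3` modulo `3`, and it is a multiple of the
discriminant of a basis. So a radical common divisor of `3` and the latter divides `tr (x ^ 2)`.
Polarization gives `2 * tr (x * y)`, and `2` is invertible modulo `3`.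
-/

open Module NumberField

section Discriminant

variable {R A : Type*} [CommRing R] [CommRing A] [Algebra R A]

theorem discr_basis_dvd_discr {ι : Type*} [Fintype ι] [DecidableEq ι] (b : Basis ι R A)
    (v : ι → A) : Algebra.discr R b ∣ Algebra.discr R v := by
  rw [← b.toMatrix_map_vecMul v, Algebra.discr_of_matrix_vecMul]
  exact dvd_mul_left _ _

theorem discr_one_self_sq_of_trace_eq_zero {x : A} (hx : Algebra.trace R A x = 0) :
    Algebra.discr R ![1, x, x ^ 2] =
      Algebra.trace R A 1 *
          (Algebra.trace R A (x ^ 2) * Algebra.trace R A (x ^ 4) - Algebra.trace R A (x ^ 3) ^ 2) -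
        Algebra.trace R A (x ^ 2) ^ 3 := by
  have traceMatrix_eq : Algebra.traceMatrix R ![1, x, x ^ 2] =
      !![Algebra.trace R A 1, 0, Algebra.trace R A (x ^ 2);
        0, Algebra.trace R A (x ^ 2), Algebra.trace R A (x ^ 3);
        Algebra.trace R A (x ^ 2), Algebra.trace R A (x ^ 3), Algebra.trace R A (x ^ 4)] := by
    ext i j
    fin_cases i <;> fin_cases j <;>
      simp [Algebra.traceMatrix_apply, Algebra.traceForm_apply, hx, ← pow_two, ← pow_succ,
        ← pow_succ', ← pow_mul]
  rw [Algebra.discr_def, traceMatrix_eq, Matrix.det_fin_three]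
  simp only [Matrix.of_apply, Matrix.cons_val]
  ring

variable {g : R} {x y : A} (b : Basis (Fin 3) R A)

theorem dvd_trace_sq_of_dvd_discr (hg : IsRadical g) (h3 : g ∣ 3) (hdiscr : g ∣ Algebra.discr R b)
    (hx : Algebra.trace R A x = 0) : g ∣ Algebra.trace R A (x ^ 2) := by
  have trace_one : Algebra.trace R A 1 = 3 := by
    simpa using Algebra.trace_algebraMap_of_basis b (1 : R)
  have dvd_discr_powers : g ∣ Algebra.discr R ![1, x, x ^ 2] :=
    hdiscr.trans (discr_basis_dvd_discr b _)
  have dvd_trace_sq_pow : g ∣ Algebra.trace R A (x ^ 2) ^ 3 := by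
    rwa [discr_one_self_sq_of_trace_eq_zero hx, trace_one,
      dvd_sub_right (h3.mul_right _)] at dvd_discr_powers
  exact hg 3 _ dvd_trace_sq_pow

theorem dvd_trace_mul_of_dvd_discr (hg : IsRadical g) (h3 : g ∣ 3) (hdiscr : g ∣ Algebra.discr R b)
    (hx : Algebra.trace R A x = 0) (hy : Algebra.trace R A y = 0) :
    g ∣ Algebra.trace R A (x * y) := by
  have dvd_sq {z : A} (hz : Algebra.trace R A z = 0) : g ∣ Algebra.trace R A (z ^ 2) :=
    dvd_trace_sq_of_dvd_discr b hg h3 hdiscr hz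
  have hxy : Algebra.trace R A (x + y) = 0 := by rw [map_add, hx, hy, add_zero]
  have polarization : 2 * Algebra.trace R A (x * y) =
      Algebra.trace R A ((x + y) ^ 2) - Algebra.trace R A (x ^ 2) - Algebra.trace R A (y ^ 2) := by
    rw [show (x + y) ^ 2 = x ^ 2 + y ^ 2 + (x * y + x * y) by ring]
    simp only [map_add]
    ring
  have dvd_two_mul : g ∣ 2 * Algebra.trace R A (x * y) :=
    polarization ▸ ((dvd_sq hxy).sub (dvd_sq hx)).sub (dvd_sq hy)
  rw [show Algebra.trace R A (x * y) =
    3 * Algebra.trace R A (x * y) - 2 * Algebra.trace R A (x * y) by ring]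
  exact (h3.mul_right _).sub dvd_two_mul

end Discriminant

theorem gcd_dvd_trace_mul_general (K : Type*) [Field K] [NumberField K]
    (hdeg : finrank ℚ K = 3) (x y : 𝓞 K)
    (hx : Algebra.trace ℚ K (x : K) = 0) (hy : Algebra.trace ℚ K (y : K) = 0) :
    ∃ m : ℤ, Algebra.trace ℚ K ((x : K) * (y : K)) = ((Int.gcd 3 (discr K) : ℤ) * m : ℤ) := by
  have b : Basis (Fin 3) ℤ (𝓞 K) :=
    finBasisOfFinrankEq ℤ (𝓞 K) ((RingOfIntegers.rank K).trans hdeg)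
  have hgcd : (Int.gcd 3 (discr K) : ℤ) ∣ 3 := Int.gcd_dvd_left ..
  have hrad : IsRadical (Int.gcd 3 (discr K) : ℤ) :=
    (Int.prime_three.squarefree.squarefree_of_dvd hgcd).isRadical
  have hdiscr : (Int.gcd 3 (discr K) : ℤ) ∣ Algebra.discr ℤ b :=
    discr_eq_discr K b ▸ Int.gcd_dvd_right ..
  rw [← Algebra.coe_trace_int, Int.cast_eq_zero] at hx hy
  obtain ⟨m, hm⟩ := dvd_trace_mul_of_dvd_discr b hrad hgcd hdiscr hx hy
  exact ⟨m, by rw [← map_mul, ← Algebra.coe_trace_int, hm]⟩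

/-- For a cubic field `K` of fundamental discriminant `d` and `g = gcd(3, d)`,
`g` divides the trace of `x·y` for all trace-zero algebraic integers `x, y` of `K`. -/
theorem gcd_dvd_trace_mul (K : Type*) [Field K] [NumberField K]
    (hdeg : Module.finrank ℚ K = 3)
    (hfund : IsFundamentalDiscriminant (NumberField.discr K))
    (x y : NumberField.RingOfIntegers K)
    (hx : Algebra.trace ℚ K (x : K) = 0)
    (hy : Algebra.trace ℚ K (y : K) = 0) :
    ∃ m : ℤ,
      Algebra.trace ℚ K ((x : K) * (y : K)) =
        (((Int.gcd 3 (NumberField.discr K) : ℤ) * m : ℤ) : ℚ) :=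
  gcd_dvd_trace_mul_general K hdeg x y hx hy
end

section
/- Let K and L be totally real cubic number fields (number fields of degree 3 over ℚ all of whose complex embeddings are real) whose discriminants are both equal to the same fundamental discriminant d. If for every integer n the number of trace-zero algebraic integers x of K with Tr_{K/ℚ}(x²) = n equals the number of trace-zero algebraic integers y of L with Tr_{L/ℚ}(y²) = n, then K and L are isomorphic as fields. -/
/-!
The trace form on the trace-zero integers of `K` is a positive definite binary form whose
discriminant depends only on `d`. By reduction theory the representation numbers determine such a
form up to equivalence, so there is an isometry `φ` between the two trace-zero lattices.

A trace-zero integer `x` of norm `N` satisfies `x³ = q x + N` with `q = Tr (x²) / 2`, and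
`4 q³ - 27 N² = d I²`, where `I` is the index of `ℤ[x]` up to sign. It remains to see that `φ x` has
norm `± N`, for then `x` and `± φ x` have the same minimal polynomial. The Lagrange resolvent `ℓ`
embeds the trace-zero lattice into `ℂ` with `|ℓ x|² = 3 q` and
`ℓ(x)³ = (27 N ± √(27 d) I √-1) / 2`. Being isometric, the resolvents of `x` and `φ x` differ, up to
complex conjugation, by a constant `k` of modulus one, whence `27 N N' + d I I' = 2 p q³` with
`p = 2 Re k³`. As `d` is fundamental, the content of `q` divides `3`, and this makes `p` an integer.
Brahmagupta's identity `27 d (N I' - N' I)² = 4 (4 - p²) q⁶` then forces `p = ± 2` and `N' = ± N`,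
because neither `d` nor `3 d` is a square; the exception `d = 12` is ruled out by Minkowski's bound.
-/

section FundamentalDiscriminant

theorem sq_emod_four_eq_zero_or_one (k : ℤ) : k ^ 2 % 4 = 0 ∨ k ^ 2 % 4 = 1 := by
  rcases Int.even_or_odd k with ⟨j, rfl⟩ | hk
  · left
    ring_nf
    omega
  · exact .inr (Int.sq_mod_four_eq_one_of_odd hk)

namespace IsFundamentalDiscriminant

variable {d : ℤ}

theorem emod_four (hd : IsFundamentalDiscriminant d) : d % 4 = 0 ∨ d % 4 = 1 := by
  rcases hd with ⟨-, ⟨h, -⟩ | ⟨h, -⟩⟩ <;> simp [h]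

theorem isUnit_of_eq_sq_mul (hd : IsFundamentalDiscriminant d) {m e : ℤ} (h : d = m ^ 2 * e)
    (he : e % 4 = 0 ∨ e % 4 = 1) : IsUnit m := by
  obtain ⟨-, ⟨-, hsf⟩ | ⟨h0, hsf, h23⟩⟩ := hd
  · exact hsf m ⟨e, by rw [h, sq]⟩
  obtain ⟨s, rfl⟩ : (4 : ℤ) ∣ d := Int.dvd_of_emod_eq_zero h0
  rw [Int.mul_ediv_cancel_left _ four_ne_zero] at hsf h23
  rcases Int.even_or_odd m with hm | hm
  · obtain ⟨k, rfl⟩ := hm.two_dvd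
    have hs : s = k ^ 2 * e := by linarith
    rcases sq_emod_four_eq_zero_or_one k with hk | hk <;> rcases he with he | he <;>
      simp [hs, Int.mul_emod, hk, he] at h23
  · have hcop : IsCoprime (m * m) 4 := by
      simpa [sq] using (Int.isCoprime_two_right.2 hm).pow (m := 2) (n := 2)
    exact hsf m (hcop.dvd_of_dvd_mul_left ⟨e, by rw [h, sq]⟩)

theorem not_nine_dvd (hd : IsFundamentalDiscriminant d) : ¬ 9 ∣ d := by
  rintro ⟨e, rfl⟩
  have := hd.isUnit_of_eq_sq_mul (m := 3) (e := e) (by ring) (by have := hd.emod_four; omega)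
  norm_num [Int.isUnit_iff] at this

theorem not_isSquare (hd : IsFundamentalDiscriminant d) : ¬ IsSquare d := by
  rintro ⟨m, rfl⟩
  have hm := hd.isUnit_of_eq_sq_mul (m := m) (e := 1) (by ring) (by norm_num)
  exact hd.1 (Int.isUnit_mul_self hm)

theorem eq_twelve_of_isSquare_three_mul (hd : IsFundamentalDiscriminant d)
    (h : IsSquare (3 * d)) : d = 12 := by
  obtain ⟨m, hm⟩ := h
  obtain ⟨k, rfl⟩ : 3 ∣ m := or_self_iff.1 (Int.prime_three.dvd_or_dvd ⟨d, hm.symm⟩)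
  have hk : d = 3 * k ^ 2 := by linarith
  rcases Int.even_or_odd k with heven | hodd
  · obtain ⟨j, rfl⟩ := heven.two_dvd
    have hj := hd.isUnit_of_eq_sq_mul (m := j) (e := 12) (by linarith) (by norm_num)
    linarith [Int.isUnit_mul_self hj]
  · have := hd.emod_four
    have := Int.sq_mod_four_eq_one_of_odd hodd
    omega

theorem dvd_three_of_sq_mul_eq (hd : IsFundamentalDiscriminant d) {g a b c : ℤ}
    (h : g ^ 2 * (4 * a * c - b ^ 2) = 3 * d) : g ∣ 3 := by
  have hb := sq_emod_four_eq_zero_or_one b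
  by_cases h3 : 3 ∣ g
  · obtain ⟨k, rfl⟩ := h3
    have hk : IsUnit k := hd.isUnit_of_eq_sq_mul (e := 3 * (4 * (a * c) - b ^ 2))
      (by linarith) (by omega)
    exact (hk.mul_right_dvd).2 dvd_rfl
  · have hcop : IsCoprime (g ^ 2) 3 :=
      ((Int.prime_three.coprime_iff_not_dvd).2 h3).symm.pow_left
    obtain ⟨e, he⟩ : g ^ 2 ∣ d := hcop.dvd_of_dvd_mul_left ⟨_, h.symm⟩
    rcases eq_or_ne g 0 with rfl | hg
    · exact absurd (dvd_zero _) h3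
    have hbe : 4 * (a * c) - b ^ 2 = 3 * e :=
      mul_left_cancel₀ (pow_ne_zero 2 hg) (by linarith)
    exact (hd.isUnit_of_eq_sq_mul he (by omega)).dvd

end IsFundamentalDiscriminant

end FundamentalDiscriminant

section BinaryForms

open Module QuadraticMap

variable {M N : Type*} [AddCommGroup M] [AddCommGroup N]

theorem exists_basis_eq_of_isUnit_det {R V ι : Type*} [CommRing R] [AddCommGroup V] [Module R V]
    [Fintype ι] [DecidableEq ι] (b : Basis ι R V) {v : ι → V} (hv : IsUnit (b.det v)) :
    ∃ b' : Basis ι R V, ⇑b' = v :=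
  have h := b.is_basis_iff_det.2 hv
  ⟨.mk h.1 h.2.ge, Basis.coe_mk h.1 h.2.ge⟩

theorem det_bilinForm_toMatrix_eq {ι : Type*} [Fintype ι] [DecidableEq ι]
    (B : LinearMap.BilinForm ℤ M) (b c : Basis ι ℤ M) :
    (LinearMap.BilinForm.toMatrix b B).det = (LinearMap.BilinForm.toMatrix c B).det := by
  have hunit : IsUnit (b.toMatrix c).det := b.det_apply c ▸ b.isUnit_det c
  rw [← LinearMap.BilinForm.toMatrix_mul_basis_toMatrix b c B, Matrix.det_mul, Matrix.det_mul,
    Matrix.det_transpose, mul_right_comm, Int.isUnit_mul_self hunit, one_mul]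

theorem quadraticForm_apply_eq (Q : QuadraticForm ℤ M) (b : Basis (Fin 2) ℤ M) (x : M) :
    Q x = Q (b 0) * b.repr x 0 ^ 2 + polar Q (b 0) (b 1) * (b.repr x 0 * b.repr x 1) +
      Q (b 1) * b.repr x 1 ^ 2 := by
  conv_lhs => rw [← b.sum_repr x, Fin.sum_univ_two, QuadraticMap.map_add Q, QuadraticMap.map_smul,
    QuadraticMap.map_smul, polar_smul_left, polar_smul_right]
  simp only [smul_eq_mul]
  ring

theorem det_polarBilin_toMatrix (Q : QuadraticForm ℤ M) (b : Basis (Fin 2) ℤ M) :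
    (LinearMap.BilinForm.toMatrix b Q.polarBilin).det =
      4 * Q (b 0) * Q (b 1) - polar Q (b 0) (b 1) ^ 2 := by
  simp only [Matrix.det_fin_two, LinearMap.BilinForm.toMatrix_apply, polarBilin_apply_apply,
    polar_self, polar_comm Q (b 1) (b 0)]
  ring

/-- A basis `b` of a lattice of rank two is reduced for the quadratic form `Q` if, in the
notation `Q (x b₀ + y b₁) = A x² + B x y + C y²`, one has `0 ≤ B ≤ A ≤ C`. -/
structure IsReducedBasis (Q : QuadraticForm ℤ M) (b : Basis (Fin 2) ℤ M) : Prop where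
  polar_nonneg : 0 ≤ polar Q (b 0) (b 1)
  polar_le : polar Q (b 0) (b 1) ≤ Q (b 0)
  le : Q (b 0) ≤ Q (b 1)

theorem exists_basis_le_and_polar_nonneg (Q : QuadraticForm ℤ M) (b : Basis (Fin 2) ℤ M) :
    ∃ c : Basis (Fin 2) ℤ M, Q (c 0) + Q (c 1) = Q (b 0) + Q (b 1) ∧
      Q (c 0) ≤ Q (c 1) ∧ 0 ≤ polar Q (c 0) (c 1) := by
  wlog hle : Q (b 0) ≤ Q (b 1) generalizing b
  · obtain ⟨c, hsum, hc⟩ := this (b.reindex (Equiv.swap 0 1)) (by simpa using (not_le.1 hle).le)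
    exact ⟨c, by simpa [add_comm] using hsum, hc⟩
  rcases le_total 0 (polar Q (b 0) (b 1)) with hB | hB
  · exact ⟨b, rfl, hle, hB⟩
  · refine ⟨b.unitsSMul ![1, -1], ?_⟩
    simpa [Basis.unitsSMul_apply, hle] using hB

theorem exists_isReducedBasis {Q : QuadraticForm ℤ M} (hQ : Q.PosDef) (b : Basis (Fin 2) ℤ M) :
    ∃ c : Basis (Fin 2) ℤ M, IsReducedBasis Q c := by
  have : Nonempty (Basis (Fin 2) ℤ M) := ⟨b⟩
  let size (c : Basis (Fin 2) ℤ M) : ℕ := (Q (c 0) + Q (c 1)).toNat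
  have hmin (c : Basis (Fin 2) ℤ M) :
      Q (Function.argmin size 0) + Q (Function.argmin size 1) ≤ Q (c 0) + Q (c 1) := by
    have := hQ.nonneg (c 0)
    have := hQ.nonneg (c 1)
    have : size (Function.argmin size) ≤ size c := Function.argmin_le size c
    simp only [size] at this ⊢
    omega
  obtain ⟨c, hsum, hle, hB⟩ := exists_basis_le_and_polar_nonneg Q (Function.argmin size)
  refine ⟨c, hB, ?_, hle⟩
  obtain ⟨c', hc'⟩ : ∃ c' : Basis (Fin 2) ℤ M, ⇑c' = ![c 0, c 1 - c 0] :=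
    exists_basis_eq_of_isUnit_det c <| by
      simp [Basis.det_apply, Matrix.det_fin_two, Basis.toMatrix_apply]
  have hshear : Q (c 1 - c 0) = Q (c 1) + Q (c 0) - polar Q (c 0) (c 1) := by
    rw [sub_eq_add_neg, QuadraticMap.map_add Q, QuadraticMap.map_neg, polar_neg_right, polar_comm]
    ring
  have := hmin c'
  simp only [hc', Matrix.cons_val_zero, Matrix.cons_val_one] at this
  linarith

namespace IsReducedBasis

variable {Q : QuadraticForm ℤ M} {b : Basis (Fin 2) ℤ M} {Q' : QuadraticForm ℤ N}
  {b' : Basis (Fin 2) ℤ N}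

theorem apply_one_le (h : IsReducedBasis Q b) (hQ : Q.PosDef) {x : M} (hx : b.repr x 1 ≠ 0) :
    Q (b 1) ≤ Q x := by
  rw [quadraticForm_apply_eq Q b x]
  obtain ⟨hB, hBA, hAC⟩ := h
  have hA := hQ.nonneg (b 0)
  generalize Q (b 0) = A, polar Q (b 0) (b 1) = B, Q (b 1) = C, b.repr x 0 = m at *
  generalize b.repr x 1 = n at hx ⊢
  have hn : 0 < n ^ 2 := by positivity
  have hdef : 0 < m ^ 2 - |m * n| + n ^ 2 := by
    rw [abs_mul, ← sq_abs m, ← sq_abs n]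
    nlinarith [sq_nonneg (2 * |m| - |n|), sq_abs n]
  calc C ≤ A * (m ^ 2 - |m * n| + n ^ 2 - 1) + C + (C - A) * (n ^ 2 - 1) := by
        nlinarith [mul_nonneg hA (Int.sub_nonneg_of_le hdef),
          mul_nonneg (sub_nonneg.2 hAC) (Int.sub_nonneg_of_le hn)]
    _ = A * m ^ 2 - A * |m * n| + C * n ^ 2 := by ring
    _ ≤ A * m ^ 2 + B * (m * n) + C * n ^ 2 := by
        nlinarith [neg_abs_le (m * n), abs_nonneg (m * n)]

theorem apply_zero_le (h : IsReducedBasis Q b) (hQ : Q.PosDef) {x : M} (hx : x ≠ 0) :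
    Q (b 0) ≤ Q x := by
  by_cases h1 : b.repr x 1 = 0
  · have h0 : b.repr x 0 ≠ 0 := fun h0 ↦ hx <| b.ext_elem fun i ↦ by fin_cases i <;> simp [h0, h1]
    have : 0 < b.repr x 0 ^ 2 := by positivity
    rw [quadraticForm_apply_eq Q b x, h1]
    nlinarith [hQ.nonneg (b 0)]
  · exact h.le.trans (h.apply_one_le hQ h1)

theorem sq_add_sq_le (h : IsReducedBasis Q b) (hQ : Q.PosDef) (x : M) :
    b.repr x 0 ^ 2 + b.repr x 1 ^ 2 ≤ 2 * Q x := by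
  rw [quadraticForm_apply_eq Q b x]
  obtain ⟨hB, hBA, hAC⟩ := h
  have hA : 0 < Q (b 0) := hQ _ (b.ne_zero 0)
  generalize Q (b 0) = A, polar Q (b 0) (b 1) = B, Q (b 1) = C, b.repr x 0 = m at *
  generalize b.repr x 1 = n
  calc m ^ 2 + n ^ 2 ≤ A * (m ^ 2 + n ^ 2) := by nlinarith [sq_nonneg m, sq_nonneg n]
    _ ≤ 2 * A * (m ^ 2 + n ^ 2) + B * (2 * (m * n)) := by
        nlinarith [sq_nonneg (m + n), sq_nonneg m, sq_nonneg n]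
    _ ≤ 2 * (A * m ^ 2 + B * (m * n) + C * n ^ 2) := by nlinarith [sq_nonneg n]

theorem finite_fiber (h : IsReducedBasis Q b) (hQ : Q.PosDef) (k : ℤ) : {x | Q x = k}.Finite := by
  refine ((Set.finite_Icc (fun _ ↦ -(2 * k)) fun _ ↦ 2 * k).preimage
    b.equivFun.injective.injOn).subset fun x hx ↦ ?_
  have hle := h.sq_add_sq_le hQ x
  rw [show Q x = k from hx] at hle
  have hsq (i : Fin 2) : b.repr x i ^ 2 ≤ 2 * k := by
    fin_cases i <;> simp <;> nlinarith
  exact ⟨fun i ↦ show -(2 * k) ≤ b.repr x i by linarith [Int.le_self_sq (-b.repr x i), hsq i],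
    fun i ↦ (Int.le_self_sq _).trans (hsq i)⟩

theorem apply_zero_le_of_natCard_eq (h : IsReducedBasis Q b) (h' : IsReducedBasis Q' b')
    (hQ : Q.PosDef) (hQ' : Q'.PosDef)
    (hcard : ∀ k, Nat.card {x // Q x = k} = Nat.card {y // Q' y = k}) :
    Q' (b' 0) ≤ Q (b 0) := by
  have : Finite {x // Q x = Q (b 0)} := h.finite_fiber hQ _
  have : Nonempty {x // Q x = Q (b 0)} := ⟨b 0, rfl⟩
  obtain ⟨⟨y, hy⟩⟩ := (Nat.card_pos_iff.1 (hcard (Q (b 0)) ▸ Nat.card_pos)).1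
  have hy0 : y ≠ 0 := by
    rintro rfl
    exact (hQ _ (b.ne_zero 0)).ne (by simpa using hy)
  exact hy ▸ h'.apply_zero_le hQ' hy0

theorem apply_one_le_of_natCard_eq (h : IsReducedBasis Q b) (h' : IsReducedBasis Q' b')
    (hQ : Q.PosDef) (hQ' : Q'.PosDef) (h0 : Q (b 0) = Q' (b' 0))
    (hcard : ∀ k, Nat.card {x // Q x = k} = Nat.card {y // Q' y = k}) :
    Q' (b' 1) ≤ Q (b 1) := by
  by_contra! hlt
  have hrepr (y : N) (hy : Q' y = Q (b 1)) : b'.repr y 1 = 0 := by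
    by_contra hne
    exact (h'.apply_one_le hQ' hne).not_gt (hy ▸ hlt)
  let f : {y // Q' y = Q (b 1)} → {x // Q x = Q (b 1)} := fun y ↦
    ⟨b'.repr y 0 • b 0, by
      have := y.2
      rw [quadraticForm_apply_eq Q' b' y, hrepr y y.2] at this
      rw [QuadraticMap.map_smul, h0, smul_eq_mul]
      linarith⟩
  have hf : Function.Injective f := fun y z hyz ↦ by
    have h0 : b'.repr y 0 = b'.repr z 0 := by simpa [f] using congr(b.repr ($hyz : M) 0)
    refine Subtype.ext (b'.ext_elem fun i ↦ ?_)
    fin_cases i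
    exacts [h0, (hrepr y y.2).trans (hrepr z z.2).symm]
  have : Finite {x // Q x = Q (b 1)} := h.finite_fiber hQ _
  obtain ⟨y, hy⟩ := (hf.bijective_of_nat_card_le (hcard _).le).surjective ⟨b 1, rfl⟩
  have := congr(b.repr ($hy : M) 1)
  simp [f] at this

end IsReducedBasis

theorem equivalent_of_apply_basis_eq {Q : QuadraticForm ℤ M} {Q' : QuadraticForm ℤ N}
    (b : Basis (Fin 2) ℤ M) (b' : Basis (Fin 2) ℤ N) (h0 : Q (b 0) = Q' (b' 0))
    (hpolar : polar Q (b 0) (b 1) = polar Q' (b' 0) (b' 1)) (h1 : Q (b 1) = Q' (b' 1)) :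
    Q.Equivalent Q' :=
  ⟨{ b.repr.trans b'.repr.symm with
    map_app' := fun x ↦ by
      rw [quadraticForm_apply_eq Q b x, quadraticForm_apply_eq Q' b', h0, hpolar, h1]
      simp }⟩

theorem equivalent_of_det_eq_of_natCard_eq {Q : QuadraticForm ℤ M} {Q' : QuadraticForm ℤ N}
    (hQ : Q.PosDef) (hQ' : Q'.PosDef) (b : Basis (Fin 2) ℤ M) (b' : Basis (Fin 2) ℤ N)
    (hdet : (LinearMap.BilinForm.toMatrix b Q.polarBilin).det =
      (LinearMap.BilinForm.toMatrix b' Q'.polarBilin).det)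
    (hcard : ∀ k, Nat.card {x // Q x = k} = Nat.card {y // Q' y = k}) : Q.Equivalent Q' := by
  obtain ⟨c, hc⟩ := exists_isReducedBasis hQ b
  obtain ⟨c', hc'⟩ := exists_isReducedBasis hQ' b'
  have hcard' := fun k ↦ (hcard k).symm
  have h0 : Q (c 0) = Q' (c' 0) :=
    (hc'.apply_zero_le_of_natCard_eq hc hQ' hQ hcard').antisymm
      (hc.apply_zero_le_of_natCard_eq hc' hQ hQ' hcard)
  have h1 : Q (c 1) = Q' (c' 1) :=
    (hc'.apply_one_le_of_natCard_eq hc hQ' hQ h0.symm hcard').antisymm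
      (hc.apply_one_le_of_natCard_eq hc' hQ hQ' h0 hcard)
  rw [det_bilinForm_toMatrix_eq _ b c, det_bilinForm_toMatrix_eq _ b' c',
    det_polarBilin_toMatrix, det_polarBilin_toMatrix, h0, h1, sub_right_inj,
    sq_eq_sq₀ hc.polar_nonneg hc'.polar_nonneg] at hdet
  exact equivalent_of_apply_basis_eq c c' h0 hdet h1

end BinaryForms

section NormPreserving

open Complex ComplexConjugate

theorem eq_or_eq_conj_of_re_eq_of_normSq_eq {w w' : ℂ} (hre : w'.re = w.re)
    (hnorm : normSq w' = normSq w) : w' = w ∨ w' = conj w := by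
  have him : w'.im ^ 2 = w.im ^ 2 := by
    rw [normSq_apply, normSq_apply, hre] at hnorm
    linarith
  rcases sq_eq_sq_iff_eq_or_eq_neg.1 him with h | h
  · exact .inl (Complex.ext hre h)
  · exact .inr (Complex.ext hre h)

theorem exists_normSq_eq_one_of_normSq_eq {G : Type*} [AddGroup G] {f g : G →+ ℂ}
    (hfg : ∀ x, normSq (g x) = normSq (f x)) :
    ∃ k : ℂ, normSq k = 1 ∧ ((∀ x, g x = k * f x) ∨ ∀ x, g x = k * conj (f x)) := by
  by_cases hf : ∀ x, f x = 0
  · refine ⟨1, map_one _, .inl fun x ↦ ?_⟩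
    rw [hf, mul_zero, ← normSq_eq_zero, hfg, hf, map_zero]
  push Not at hf
  obtain ⟨a, ha⟩ := hf
  have hga : conj (g a) ≠ 0 := by
    rwa [Ne, map_eq_zero, ← normSq_eq_zero, hfg, normSq_eq_zero]
  let F : G →+ ℂ := (AddMonoidHom.mulLeft (conj (f a))).comp f
  let F' : G →+ ℂ := (AddMonoidHom.mulLeft (conj (g a))).comp g
  have hcases (x : G) : F' x = F x ∨ F' x = conj (F x) := by
    apply eq_or_eq_conj_of_re_eq_of_normSq_eq
    · have hadd := hfg (a + x)
      rw [AddMonoidHom.map_add, AddMonoidHom.map_add, normSq_add, normSq_add, hfg, hfg] at hadd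
      simp [F, F'] at hadd ⊢
      linarith
    · simp [F, F', hfg]
  let conjHom : ℂ →+ ℂ := (starRingEnd ℂ : ℂ →+* ℂ)
  have hcover : ((⊤ : AddSubgroup G) : Set G) ⊆
      F'.eqLocus F ∪ F'.eqLocus (conjHom.comp F) := fun x _ ↦ hcases x
  rcases AddSubgroupClass.subset_union.1 hcover with h | h
  · refine ⟨conj (f a) / conj (g a), by simp [hfg, ha], .inl fun x ↦ ?_⟩
    have hx : conj (g a) * g x = conj (f a) * f x := h (AddSubgroup.mem_top x)
    rw [div_mul_eq_mul_div, eq_div_iff hga, ← hx, mul_comm]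
  · refine ⟨f a / conj (g a), by simp [hfg, ha], .inr fun x ↦ ?_⟩
    have hx : conj (g a) * g x = f a * conj (f x) := by
      have hx : F' x = conj (F x) := h (AddSubgroup.mem_top x)
      simpa [F, F'] using hx
    rw [div_mul_eq_mul_div, eq_div_iff hga, ← hx, mul_comm]

end NormPreserving

section PrimeDegree

open Module Polynomial

variable {F K L : Type*} [Field F] [Field K] [Field L] [Algebra F K] [Algebra F L]

theorem exists_powerBasis_minpoly_gen_eq (hK : (finrank F K).Prime) {u : K}
    (hu : u ∉ Set.range (algebraMap F K)) {f : F[X]} (hf : f.Monic)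
    (hdeg : f.natDegree = finrank F K) (hfu : aeval u f = 0) :
    ∃ pb : PowerBasis F K, minpoly F pb.gen = f := by
  have := Subalgebra.isSimpleOrder_of_finrank_prime F K hK
  have htop : Algebra.adjoin F {u} = ⊤ := (eq_bot_or_eq_top _).resolve_left fun h ↦
    hu (Algebra.mem_bot.1 (h ▸ Algebra.self_mem_adjoin_singleton F u))
  have hint : IsIntegral F u := ⟨f, hf, hfu⟩
  let pb := PowerBasis.ofAdjoinEqTop hint htop
  have hgen : pb.gen = u := PowerBasis.ofAdjoinEqTop_gen hint htop
  refine ⟨pb, (eq_of_monic_of_dvd_of_natDegree_le (minpoly.monic pb.isIntegral_gen) hf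
    (minpoly.dvd F _ (hgen ▸ hfu)) ?_).symm⟩
  rw [hdeg, pb.finrank, pb.natDegree_minpoly]

theorem nonempty_algEquiv_of_common_root (hK : (finrank F K).Prime)
    (hKL : finrank F L = finrank F K) {u : K} (hu : u ∉ Set.range (algebraMap F K)) {v : L}
    (hv : v ∉ Set.range (algebraMap F L)) {f : F[X]} (hf : f.Monic)
    (hdeg : f.natDegree = finrank F K) (hfu : aeval u f = 0) (hfv : aeval v f = 0) :
    Nonempty (K ≃ₐ[F] L) := by
  obtain ⟨pb, hpb⟩ := exists_powerBasis_minpoly_gen_eq hK hu hf hdeg hfu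
  obtain ⟨pb', hpb'⟩ := exists_powerBasis_minpoly_gen_eq (hKL ▸ hK) hv hf (hKL ▸ hdeg) hfv
  exact ⟨pb.equivOfMinpoly pb' (hpb.trans hpb'.symm)⟩

end PrimeDegree

section TraceKernel

open Module

variable {R S : Type*} [CommRing R] [CommRing S] [Algebra R S]

theorem pow_card_dvd_discr_of_forall_dvd_trace {ι : Type*} [Fintype ι] [DecidableEq ι] {r : R}
    (hr : ∀ x : S, r ∣ Algebra.trace R S x) (b : ι → S) :
    r ^ Fintype.card ι ∣ Algebra.discr R b := by
  choose q hq using hr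
  have hmat : Algebra.traceMatrix R b = r • Matrix.of fun i j ↦ q (b i * b j) := by
    ext i j
    simp [Algebra.traceMatrix_apply, Algebra.traceForm_apply, ← hq]
  exact ⟨_, by rw [Algebra.discr_def, hmat, Matrix.det_smul]⟩

theorem exists_basis_discr_ker_trace_eq {n : ℕ} {w : S} (hw : Algebra.trace R S w = 1)
    (b : Basis (Fin n) R (LinearMap.ker (Algebra.trace R S))) :
    ∃ B : Basis (Fin (n + 1)) R S,
      Algebra.discr R (fun i ↦ (b i : S)) = Algebra.trace R S 1 * Algebra.discr R B := by
  have htr (x : LinearMap.ker (Algebra.trace R S)) : Algebra.trace R S x = 0 := x.2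
  let B : Basis (Fin (n + 1)) R S := Basis.mkFinCons w b
    (fun c x hx h ↦ by simpa [hw, LinearMap.mem_ker.1 hx] using congr(Algebra.trace R S $h))
    (fun z ↦ ⟨-Algebra.trace R S z, by simp [hw]⟩)
  have hB : ⇑B = Fin.cons w (fun i ↦ (b i : S)) := Basis.coe_mkFinCons _ _ _ _
  have hone : ∑ k, B.repr 1 k • B k = 1 := B.sum_repr 1
  have hrepr : B.repr 1 0 = Algebra.trace R S 1 := by
    rw [← congr(Algebra.trace R S $hone)]
    simp [Fin.sum_univ_succ, hB, hw, htr]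
  refine ⟨B, ?_⟩
  have hrow : (∑ k, B.repr 1 k • Algebra.traceMatrix R B k) = Pi.single 0 1 := by
    ext j
    have : Algebra.trace R S (B j) = (Pi.single 0 1 : Fin (n + 1) → R) j := by
      cases j using Fin.cases <;> simp [hB, hw, htr]
    rw [← this]
    conv_rhs => rw [← one_mul (B j), ← hone]
    simp only [Finset.sum_apply, Pi.smul_apply, Algebra.traceMatrix_apply, Algebra.traceForm_apply,
      Finset.sum_mul, map_sum, smul_mul_assoc, map_smul]
  have hdet := Matrix.det_updateRow_sum (Algebra.traceMatrix R B) 0 (B.repr 1)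
  rw [hrow, hrepr, smul_eq_mul, Matrix.det_succ_row_zero, Fin.sum_univ_succ] at hdet
  simp only [Pi.single_eq_same, Fin.val_zero, pow_zero, one_mul, Matrix.updateRow_self,
    Pi.single_eq_of_ne (Fin.succ_ne_zero _), mul_zero, zero_mul, Finset.sum_const_zero,
    add_zero] at hdet
  rw [Algebra.discr_def R B, ← hdet, Algebra.discr_def]
  congr 1
  ext i j
  simp [Algebra.traceMatrix_apply, Algebra.traceForm_apply, hB]

end TraceKernel

section TraceZero

open Module NumberField

variable (K : Type*) [Field K]

/-- The lattice of algebraic integers of trace zero in `K`. -/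
noncomputable abbrev traceZero : Submodule ℤ (𝓞 K) :=
  LinearMap.ker (Algebra.trace ℤ (𝓞 K))

/-- The integral trace form `x ↦ Tr (x²)` on the algebraic integers of trace zero. -/
noncomputable def traceZeroForm : QuadraticForm ℤ (traceZero K) :=
  (LinearMap.BilinMap.toQuadraticMap (Algebra.traceForm ℤ (𝓞 K))).comp (traceZero K).subtype

variable {K}

theorem traceZeroForm_apply (x : traceZero K) :
    traceZeroForm K x = Algebra.trace ℤ (𝓞 K) ((x : 𝓞 K) ^ 2) := by
  simp [traceZeroForm, Algebra.traceForm_apply, sq]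

theorem polar_traceZeroForm (x y : traceZero K) :
    QuadraticMap.polar (traceZeroForm K) x y = 2 * Algebra.trace ℤ (𝓞 K) (x * y) := by
  have hsq : ((x + y : traceZero K) : 𝓞 K) ^ 2 = x ^ 2 + y ^ 2 + 2 • ((x : 𝓞 K) * y) := by
    rw [Submodule.coe_add, add_sq', two_nsmul]
    ring
  rw [QuadraticMap.polar, traceZeroForm_apply, traceZeroForm_apply, traceZeroForm_apply, hsq,
    map_add, map_add, map_nsmul]
  ring

variable [NumberField K]

theorem trace_one_ringOfIntegers : Algebra.trace ℤ (𝓞 K) 1 = finrank ℚ K := by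
  simpa [RingOfIntegers.rank] using Algebra.trace_algebraMap (S := 𝓞 K) (1 : ℤ)

variable (hK : finrank ℚ K = 3) (h9 : ¬ 9 ∣ discr K)

include hK h9

theorem exists_trace_eq_one : ∃ w : 𝓞 K, Algebra.trace ℤ (𝓞 K) w = 1 := by
  have hone : Algebra.trace ℤ (𝓞 K) 1 = 3 := by rw [trace_one_ringOfIntegers, hK, Nat.cast_ofNat]
  obtain ⟨x, hx⟩ : ∃ x : 𝓞 K, ¬ 3 ∣ Algebra.trace ℤ (𝓞 K) x := by
    by_contra! h
    have h27 := pow_card_dvd_discr_of_forall_dvd_trace h (RingOfIntegers.basis K)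
    rw [← finrank_eq_card_chooseBasisIndex, RingOfIntegers.rank, hK, ← discr] at h27
    exact h9 (dvd_trans (by norm_num) h27)
  obtain ⟨s, t, hst⟩ := (Int.prime_three.coprime_iff_not_dvd).2 hx
  exact ⟨s • 1 + t • x, by
    rw [map_add, map_smul, map_smul, hone, smul_eq_mul, smul_eq_mul, hst]⟩

theorem finrank_traceZero : finrank ℤ (traceZero K) = 2 := by
  obtain ⟨w, hw⟩ := exists_trace_eq_one hK h9
  have hrange : LinearMap.range (Algebra.trace ℤ (𝓞 K)) = ⊤ :=
    LinearMap.range_eq_top.2 fun n ↦ ⟨n • w, by rw [map_smul, hw, smul_eq_mul, mul_one]⟩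
  have := (traceZero K).finrank_quotient_add_finrank
  rw [(LinearMap.quotKerEquivRange _).finrank_eq, hrange, finrank_top, finrank_self,
    RingOfIntegers.rank, hK] at this
  exact Nat.add_left_cancel this

theorem det_traceZeroForm (b : Basis (Fin 2) ℤ (traceZero K)) :
    (LinearMap.BilinForm.toMatrix b (traceZeroForm K).polarBilin).det = 12 * discr K := by
  obtain ⟨w, hw⟩ := exists_trace_eq_one hK h9
  obtain ⟨B, hB⟩ := exists_basis_discr_ker_trace_eq hw b
  rw [trace_one_ringOfIntegers, hK, discr_eq_discr, Algebra.discr_def, Matrix.det_fin_two] at hB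
  simp only [Algebra.traceMatrix_apply, Algebra.traceForm_apply] at hB
  rw [det_polarBilin_toMatrix, polar_traceZeroForm, traceZeroForm_apply, traceZeroForm_apply, sq,
    sq]
  rw [mul_comm (b 1 : 𝓞 K) (b 0)] at hB
  push_cast at hB
  linarith

end TraceZero

section CubicAlgebra

open Module

variable {R S : Type*} [CommRing R] [CommRing S] [Algebra R S]

theorem matrix_fin_three_trace_sq (A : Matrix (Fin 3) (Fin 3) R) :
    (A ^ 2).trace = A.trace ^ 2 - 2 * A.adjugate.trace := by
  simp only [Matrix.trace_fin_three, Matrix.adjugate_fin_three, sq, Matrix.mul_apply,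
    Fin.sum_univ_three, Matrix.of_apply, Matrix.cons_val]
  ring

theorem matrix_fin_three_pow_three (A : Matrix (Fin 3) (Fin 3) R) :
    A ^ 3 = A.trace • A ^ 2 - A.adjugate.trace • A + A.det • 1 := by
  have hadj : A.adjugate = A ^ 2 - A.trace • A + A.adjugate.trace • 1 := by
    ext i j
    simp only [Matrix.trace_fin_three, Matrix.adjugate_fin_three, sq, Matrix.add_apply,
      Matrix.sub_apply, Matrix.smul_apply, Matrix.mul_apply, Fin.sum_univ_three, smul_eq_mul]
    fin_cases i <;> fin_cases j <;> simp <;> ring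
  have hdet := A.mul_adjugate
  rw [hadj, mul_add, mul_sub, mul_smul_comm, mul_smul_comm, mul_one, ← pow_succ', ← sq] at hdet
  rw [← hdet]
  abel

theorem exists_pow_three_eq_of_trace_eq_zero (b : Basis (Fin 3) R S) {x : S}
    (hx : Algebra.trace R S x = 0) :
    ∃ q, Algebra.trace R S (x ^ 2) = 2 * q ∧
      x ^ 3 = q • x + algebraMap R S (Algebra.norm R x) := by
  rw [Algebra.trace_eq_matrix_trace b] at hx ⊢
  rw [Algebra.norm_eq_matrix_det b, map_pow]
  refine ⟨-(Algebra.leftMulMatrix b x).adjugate.trace, ?_, Algebra.leftMulMatrix_injective b ?_⟩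
  · rw [matrix_fin_three_trace_sq, hx]
    ring
  · rw [map_pow, map_add, map_smul, AlgHom.commutes, matrix_fin_three_pow_three, hx,
      Algebra.algebraMap_eq_smul_one]
    module

theorem discr_one_self_sq (b : Basis (Fin 3) R S) {x : S} {q : R}
    (hx : Algebra.trace R S x = 0) (hq : Algebra.trace R S (x ^ 2) = 2 * q)
    (hx3 : x ^ 3 = q • x + algebraMap R S (Algebra.norm R x)) :
    Algebra.discr R ![1, x, x ^ 2] = 4 * q ^ 3 - 27 * Algebra.norm R x ^ 2 := by
  have htr_alg (r : R) : Algebra.trace R S (algebraMap R S r) = 3 * r := by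
    rw [Algebra.trace_algebraMap_of_basis b, Fintype.card_fin, nsmul_eq_mul, Nat.cast_ofNat]
  have h0 : Algebra.trace R S 1 = 3 := by rw [← map_one (algebraMap R S), htr_alg, mul_one]
  have h3 : Algebra.trace R S (x ^ 3) = 3 * Algebra.norm R x := by
    rw [hx3, map_add, map_smul, hx, htr_alg, smul_zero, zero_add]
  have h4 : Algebra.trace R S (x ^ 4) = 2 * q ^ 2 := by
    rw [show x ^ 4 = q • x ^ 2 + Algebra.norm R x • x by
      rw [pow_succ, hx3, add_mul, smul_mul_assoc, Algebra.smul_def (Algebra.norm R x), sq],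
      map_add, map_smul, map_smul, hq, hx, smul_eq_mul, smul_zero, add_zero]
    ring
  have hmul : x * x = x ^ 2 ∧ x * x ^ 2 = x ^ 3 ∧ x ^ 2 * x = x ^ 3 ∧ x ^ 2 * x ^ 2 = x ^ 4 := by
    refine ⟨?_, ?_, ?_, ?_⟩ <;> ring
  have hmat : Algebra.traceMatrix R ![1, x, x ^ 2] =
      !![3, 0, 2 * q; 0, 2 * q, 3 * Algebra.norm R x;
        2 * q, 3 * Algebra.norm R x, 2 * q ^ 2] := by
    ext i j
    fin_cases i <;> fin_cases j <;>
      simp [Algebra.traceMatrix_apply, Algebra.traceForm_apply, hmul, h0, hx, hq, h3, h4]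
  rw [Algebra.discr_def, hmat, Matrix.det_fin_three]
  simp only [Matrix.of_apply, Matrix.cons_val]
  ring

theorem exists_norm_sq_add_discr_mul_sq_eq (b : Basis (Fin 3) R S) {x : S} {q : R}
    (hx : Algebra.trace R S x = 0) (hq : Algebra.trace R S (x ^ 2) = 2 * q)
    (hx3 : x ^ 3 = q • x + algebraMap R S (Algebra.norm R x)) :
    ∃ I, 27 * Algebra.norm R x ^ 2 + Algebra.discr R b * I ^ 2 = 4 * q ^ 3 := by
  refine ⟨(b.toMatrix ![1, x, x ^ 2]).det, ?_⟩
  have hdiscr := Algebra.discr_of_matrix_vecMul b (b.toMatrix ![1, x, x ^ 2])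
  rw [b.toMatrix_map_vecMul, discr_one_self_sq b hx hq hx3] at hdiscr
  linear_combination -hdiscr

end CubicAlgebra

section CubicField

open Module NumberField

variable {K : Type*} [Field K]

/-- Half of `Tr (x²)`, for `x` an algebraic integer of trace zero; in a cubic field the integer
division is exact. -/
noncomputable def halfTrace (x : traceZero K) : ℤ := traceZeroForm K x / 2

variable [NumberField K] (hK : finrank ℚ K = 3)

include hK

theorem two_mul_halfTrace_and_pow_three (x : traceZero K) :
    traceZeroForm K x = 2 * halfTrace x ∧
      (x : 𝓞 K) ^ 3 = halfTrace x • (x : 𝓞 K) + algebraMap ℤ (𝓞 K) (Algebra.norm ℤ (x : 𝓞 K)) := by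
  let b := finBasisOfFinrankEq ℤ (𝓞 K) ((RingOfIntegers.rank K).trans hK)
  obtain ⟨q, hq, hcube⟩ := exists_pow_three_eq_of_trace_eq_zero b x.2
  have hhalf : halfTrace x = q := by
    rw [halfTrace, traceZeroForm_apply, hq, Int.mul_ediv_cancel_left q two_ne_zero]
  exact ⟨by rw [traceZeroForm_apply, hhalf, hq], by rw [hhalf, hcube]⟩

theorem traceZeroForm_eq_two_mul_halfTrace (x : traceZero K) :
    traceZeroForm K x = 2 * halfTrace x :=
  (two_mul_halfTrace_and_pow_three hK x).1

theorem traceZero_pow_three (x : traceZero K) :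
    (x : 𝓞 K) ^ 3 = halfTrace x • (x : 𝓞 K) + algebraMap ℤ (𝓞 K) (Algebra.norm ℤ (x : 𝓞 K)) :=
  (two_mul_halfTrace_and_pow_three hK x).2

theorem exists_norm_sq_add_discr_mul_sq_eq_halfTrace (x : traceZero K) :
    ∃ I, 27 * Algebra.norm ℤ (x : 𝓞 K) ^ 2 + discr K * I ^ 2 = 4 * halfTrace x ^ 3 := by
  let b := finBasisOfFinrankEq ℤ (𝓞 K) ((RingOfIntegers.rank K).trans hK)
  rw [← discr_eq_discr K b]
  refine exists_norm_sq_add_discr_mul_sq_eq b x.2 ?_ (traceZero_pow_three hK x)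
  rw [← traceZeroForm_apply, traceZeroForm_eq_two_mul_halfTrace hK]

theorem halfTrace_add (x y : traceZero K) :
    halfTrace (x + y) = halfTrace x + halfTrace y + Algebra.trace ℤ (𝓞 K) (x * y) := by
  have h := polar_traceZeroForm x y
  simp only [QuadraticMap.polar, traceZeroForm_eq_two_mul_halfTrace hK] at h
  linarith

theorem four_mul_halfTrace_mul_halfTrace_sub_sq (h9 : ¬ 9 ∣ discr K)
    (b : Basis (Fin 2) ℤ (traceZero K)) :
    4 * halfTrace (b 0) * halfTrace (b 1) - Algebra.trace ℤ (𝓞 K) (b 0 * b 1) ^ 2 =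
      3 * discr K := by
  have h := det_traceZeroForm hK h9 b
  rw [det_polarBilin_toMatrix, polar_traceZeroForm, traceZeroForm_eq_two_mul_halfTrace hK,
    traceZeroForm_eq_two_mul_halfTrace hK] at h
  linarith

theorem dvd_three_of_forall_dvd_halfTrace (hd : IsFundamentalDiscriminant (discr K)) {g : ℤ}
    (hg : ∀ x : traceZero K, g ∣ halfTrace x) : g ∣ 3 := by
  let b := finBasisOfFinrankEq ℤ (traceZero K) (finrank_traceZero hK hd.not_nine_dvd)
  obtain ⟨a, ha⟩ := hg (b 0)
  obtain ⟨c, hc⟩ := hg (b 1)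
  obtain ⟨e, he⟩ := hg (b 0 + b 1)
  have hdet := four_mul_halfTrace_mul_halfTrace_sub_sq hK hd.not_nine_dvd b
  have hadd := halfTrace_add hK (b 0) (b 1)
  rw [ha, hc] at hdet hadd
  rw [he] at hadd
  refine hd.dvd_three_of_sq_mul_eq (a := a) (b := e - a - c) (c := c) ?_
  rw [← hdet, show Algebra.trace ℤ (𝓞 K) (b 0 * b 1) = g * (e - a - c) by linarith]
  ring

end CubicField

section CommonRoot

open Module NumberField Polynomial

variable {K L : Type*} [Field K] [NumberField K] [Field L] [NumberField L]

theorem notMem_range_algebraMap_of_ne_zero {x : traceZero K} (hx : x ≠ 0) :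
    ((x : 𝓞 K) : K) ∉ Set.range (algebraMap ℚ K) := by
  rintro ⟨r, hr⟩
  have htr : Algebra.trace ℚ K ((x : 𝓞 K) : K) = 0 := by
    rw [← Algebra.coe_trace_int, x.2, Int.cast_zero]
  rw [← hr, Algebra.trace_algebraMap, smul_eq_zero_iff_right finrank_pos.ne'] at htr
  rw [htr, map_zero] at hr
  exact hx (Subtype.ext (RingOfIntegers.ext hr.symm))

theorem aeval_eq_zero_of_pow_three_eq {q n : ℤ} {z : 𝓞 K}
    (hz : z ^ 3 = q • z + algebraMap ℤ (𝓞 K) n) :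
    aeval (z : K) (X ^ 3 - C (q : ℚ) * X - C (n : ℚ)) = 0 := by
  have hzK := congrArg (algebraMap (𝓞 K) K) hz
  simp only [map_pow, map_add, eq_intCast, map_intCast, zsmul_eq_mul, map_mul] at hzK
  simp [hzK]

theorem nonempty_ringEquiv_of_pow_three_eq (hK : finrank ℚ K = 3) (hL : finrank ℚ L = 3) {q n : ℤ}
    {x : traceZero K} {y : traceZero L} (hx : x ≠ 0) (hy : y ≠ 0)
    (hx3 : (x : 𝓞 K) ^ 3 = q • (x : 𝓞 K) + algebraMap ℤ (𝓞 K) n)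
    (hy3 : (y : 𝓞 L) ^ 3 = q • (y : 𝓞 L) + algebraMap ℤ (𝓞 L) n) : Nonempty (K ≃+* L) := by
  have hmonic : (X ^ 3 - C (q : ℚ) * X - C (n : ℚ)).Monic := by monicity!
  have hdeg : (X ^ 3 - C (q : ℚ) * X - C (n : ℚ)).natDegree = finrank ℚ K := by
    rw [hK]
    compute_degree!
  obtain ⟨e⟩ := nonempty_algEquiv_of_common_root (hK ▸ Nat.prime_three) (hL.trans hK.symm)
    (notMem_range_algebraMap_of_ne_zero hx) (notMem_range_algebraMap_of_ne_zero hy) hmonic hdeg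
    (aeval_eq_zero_of_pow_three_eq hx3) (aeval_eq_zero_of_pow_three_eq hy3)
  exact ⟨e.toRingEquiv⟩

end CommonRoot

section TotallyReal

open Module NumberField Complex

variable {K : Type*} [Field K]

theorem isTotallyReal_of_forall_im_eq_zero (h : ∀ (φ : K →+* ℂ) (x : K), (φ x).im = 0) :
    IsTotallyReal K := by
  refine (isTotallyReal_iff K).2 fun v ↦
    InfinitePlace.isReal_iff.2 (ComplexEmbedding.isReal_iff.2 ?_)
  exact RingHom.ext fun x ↦ Complex.conj_eq_iff_im.2 (h v.embedding x)

variable [NumberField K] [IsTotallyReal K]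

theorem exists_realEmbeddings {n : ℕ} (hn : finrank ℚ K = n) :
    ∃ ρ : Fin n → 𝓞 K →+* ℝ, (∀ i, Function.Injective (ρ i)) ∧
      (∀ x, (Algebra.trace ℤ (𝓞 K) x : ℝ) = ∑ i, ρ i x) ∧
        ∀ x, (Algebra.norm ℤ x : ℝ) = ∏ i, ρ i x := by
  let e : Fin n ≃ (K →ₐ[ℚ] ℂ) := Fintype.equivOfCardEq (by rw [AlgHom.card, hn, Fintype.card_fin])
  have hreal (i : Fin n) : ComplexEmbedding.IsReal (e i : K →+* ℂ) :=
    IsTotallyReal.complexEmbedding_isReal _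
  let ρ (i : Fin n) : 𝓞 K →+* ℝ := (hreal i).embedding.comp (algebraMap (𝓞 K) K)
  have hcoe (i : Fin n) (x : 𝓞 K) : e i x = (ρ i x : ℂ) :=
    ((hreal i).coe_embedding_apply x).symm
  refine ⟨ρ, fun i ↦ (hreal i).embedding.injective.comp RingOfIntegers.coe_injective, fun x ↦ ?_,
    fun x ↦ ?_⟩
  · have h := trace_eq_sum_embeddings ℂ (K := ℚ) (x := (x : K))
    simp only [← e.sum_comp, hcoe, ← Algebra.coe_trace_int, eq_ratCast] at h
    exact_mod_cast h
  · have h := Algebra.norm_eq_prod_embeddings ℚ ℂ (x : K)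
    simp only [← e.prod_comp, hcoe, ← Algebra.coe_norm_int, eq_ratCast] at h
    exact_mod_cast h

theorem posDef_traceZeroForm : (traceZeroForm K).PosDef := by
  intro x hx
  obtain ⟨ρ, hinj, htrace, -⟩ := exists_realEmbeddings (K := K) rfl
  have hpos : (0 : ℝ) < traceZeroForm K x := by
    rw [traceZeroForm_apply, htrace]
    refine Finset.sum_pos (fun i _ ↦ ?_) ⟨⟨0, finrank_pos⟩, Finset.mem_univ _⟩
    rw [map_pow]
    exact sq_pos_of_ne_zero ((map_ne_zero_iff _ (hinj i)).2 fun h ↦ hx (Subtype.ext h))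
  exact_mod_cast hpos

variable (hK : finrank ℚ K = 3)

include hK

theorem twelve_lt_discr : 12 < discr K := by
  have hpos : 0 < discr K := by
    rw [← Int.sign_eq_one_iff_pos, sign_discr, IsTotallyReal.nrComplexPlaces_eq_zero, pow_zero]
  have hbound := abs_discr_ge' K
  rw [hK, IsTotallyReal.nrComplexPlaces_eq_zero, abs_of_pos hpos] at hbound
  norm_num [Nat.factorial] at hbound
  have : (12 : ℝ) < discr K := by linarith
  exact_mod_cast this

theorem exists_resolvent :
    ∃ f : traceZero K →+ ℂ, ∀ x, normSq (f x) = 3 / 2 * traceZeroForm K x ∧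
      (f x ^ 3).re = 27 / 2 * Algebra.norm ℤ (x : 𝓞 K) := by
  obtain ⟨ρ, -, htrace, hnorm⟩ := exists_realEmbeddings hK
  -- `ρ₀ + ω ρ₁ + ω² ρ₂`, for `ω` a primitive cube root of unity
  let f : traceZero K →+ ℂ := AddMonoidHom.mk'
    (fun x ↦ ⟨ρ 0 x - (ρ 1 x + ρ 2 x) / 2, √3 / 2 * (ρ 1 x - ρ 2 x)⟩)
    fun x y ↦ by apply Complex.ext <;> simp <;> ring
  refine ⟨f, fun x ↦ ?_⟩
  have hsqrt : √3 ^ 2 = (3 : ℝ) := Real.sq_sqrt (by norm_num)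
  have h0 : ρ 0 x = -(ρ 1 x + ρ 2 x) := by
    have hsum := htrace x
    rw [x.2, Int.cast_zero, Fin.sum_univ_three] at hsum
    linarith
  rw [traceZeroForm_apply, htrace, hnorm, Fin.sum_univ_three, Fin.prod_univ_three]
  constructor
  · simp only [f, normSq_apply, AddMonoidHom.mk'_apply, map_pow, h0]
    linear_combination (ρ 1 x - ρ 2 x) ^ 2 / 4 * hsqrt
  · simp only [f, AddMonoidHom.mk'_apply, h0, pow_succ, pow_zero, one_mul, mul_re, mul_im]
    linear_combination 9 / 8 * (ρ 1 x + ρ 2 x) * (ρ 1 x - ρ 2 x) ^ 2 * hsqrt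

end TotallyReal

section Integrality

theorem exists_eq_mul_and_span_range_eq_top {R ι : Type*} [CommRing R] [IsDomain R]
    [IsPrincipalIdealRing R] {q : ι → R} (hq : q ≠ 0) :
    ∃ (g : R) (q₀ : ι → R), (∀ i, q i = g * q₀ i) ∧ Ideal.span (Set.range q₀) = ⊤ := by
  obtain ⟨g, hg⟩ := IsPrincipalIdealRing.principal (Ideal.span (Set.range q))
  have hdvd (i : ι) : g ∣ q i := by
    rw [← Ideal.mem_span_singleton, Ideal.span, ← hg]
    exact Ideal.subset_span ⟨i, rfl⟩
  choose q₀ hq₀ using hdvd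
  refine ⟨g, q₀, hq₀, ?_⟩
  have hg0 : g ≠ 0 := by
    rintro rfl
    exact hq (funext fun i ↦ by rw [hq₀, zero_mul, Pi.zero_apply])
  have hmul : Ideal.span {g} * Ideal.span (Set.range q₀) = Ideal.span {g} * ⊤ := by
    rw [Ideal.span_mul_span', Set.singleton_mul, ← Set.range_comp, Ideal.mul_top,
      ← Ideal.submodule_span_eq (s := {g}), ← hg]
    exact congrArg (fun f ↦ Ideal.span (Set.range f)) (funext fun i ↦ (hq₀ i).symm)
  exact (Ideal.span_singleton_mul_right_inj hg0).1 hmul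

theorem isSquare_of_mul_sq_eq_sq {m s t : ℤ} (ht : t ≠ 0) (h : m * t ^ 2 = s ^ 2) :
    IsSquare m := by
  obtain ⟨r, rfl⟩ := (Int.pow_dvd_pow_iff two_ne_zero).1 (Dvd.intro_left m h)
  refine ⟨r, mul_right_cancel₀ (pow_ne_zero 2 ht) ?_⟩
  rw [h]
  ring

theorem even_mixed_of_even {d n n' i i' : ℤ} (h : Even (27 * n ^ 2 + d * i ^ 2))
    (h' : Even (27 * n' ^ 2 + d * i' ^ 2)) : Even (27 * (n * n') + d * (i * i')) := by
  have h27 : ¬ Even (27 : ℤ) := by decide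
  simp only [Int.even_add, Int.even_mul, Int.even_pow' two_ne_zero, h27, false_or] at h h' ⊢
  tauto

theorem pow_three_dvd_mixed_of_dvd_three {d g n n' i i' : ℤ} (hg : g ∣ 3)
    (h : g ^ 3 ∣ 27 * n ^ 2 + d * i ^ 2) (h' : g ^ 3 ∣ 27 * n' ^ 2 + d * i' ^ 2) :
    g ^ 3 ∣ 27 * (n * n') + d * (i * i') := by
  have hg27 : g ^ 3 ∣ 27 := pow_dvd_pow_of_dvd hg 3
  have hi : g ^ 3 ∣ d * i ^ 2 := (dvd_add_right (hg27.mul_right _)).1 h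
  have hi' : g ^ 3 ∣ d * i' ^ 2 := (dvd_add_right (hg27.mul_right _)).1 h'
  refine dvd_add (hg27.mul_right _) ((Int.pow_dvd_pow_iff two_ne_zero).1 ?_)
  calc (g ^ 3) ^ 2 = g ^ 3 * g ^ 3 := sq _
    _ ∣ d * i ^ 2 * (d * i' ^ 2) := mul_dvd_mul hi hi'
    _ = (d * (i * i')) ^ 2 := by ring

theorem two_mul_pow_three_dvd_mixed {d g r n n' i i' : ℤ} (hg : g ∣ 3)
    (h : 27 * n ^ 2 + d * i ^ 2 = 4 * (g * r) ^ 3)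
    (h' : 27 * n' ^ 2 + d * i' ^ 2 = 4 * (g * r) ^ 3) :
    2 * g ^ 3 ∣ 27 * (n * n') + d * (i * i') := by
  have heven : Even (4 * (g * r) ^ 3) := Even.mul_right (by decide) _
  have hdvd : g ^ 3 ∣ 4 * (g * r) ^ 3 := (pow_dvd_pow_of_dvd (dvd_mul_right g r) 3).mul_left 4
  have hcop : IsCoprime 2 (g ^ 3) :=
    (IsCoprime.of_isCoprime_of_dvd_right (by decide) hg).pow_right
  exact hcop.mul_dvd (even_mixed_of_even (h ▸ heven) (h' ▸ heven)).two_dvd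
    (pow_three_dvd_mixed_of_dvd_three hg (h ▸ hdvd) (h' ▸ hdvd))

theorem exists_intCast_eq_of_span_eq_top {ι : Type*} {q : ι → ℤ} {a : ℝ}
    (hq : Ideal.span (Set.range q) = ⊤) {n : ℕ} (h : ∀ i, ∃ m : ℤ, a * q i ^ n = m) :
    ∃ p : ℤ, a = p := by
  have hmem : a ∈ (1 : Submodule ℤ ℝ) := by
    refine Submodule.mem_of_span_eq_top_of_smul_pow_mem _ _ hq a ?_
    rintro ⟨_, i, rfl⟩
    obtain ⟨m, hm⟩ := h i
    refine ⟨n, Submodule.mem_one.2 ⟨m, ?_⟩⟩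
    rw [zsmul_eq_mul, Int.cast_pow, mul_comm, hm, eq_intCast]
  obtain ⟨p, hp⟩ := Submodule.mem_one.1 hmem
  exact ⟨p, by rw [← hp, eq_intCast]⟩

theorem eq_zero_of_mul_sq_add_mul_sq_eq_zero {c d a b : ℤ} (hc : 0 < c) (hd : 0 ≤ d)
    (h : c * a ^ 2 + d * b ^ 2 = 0) : a = 0 := by
  have ha : c * a ^ 2 = 0 := by
    linarith [mul_nonneg hc.le (sq_nonneg a), mul_nonneg hd (sq_nonneg b)]
  simpa [hc.ne'] using ha

theorem IsFundamentalDiscriminant.eq_two_or_eq_neg_two_of_mul_sq_eq {d p q t : ℤ}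
    (hfund : IsFundamentalDiscriminant d) (hd : 12 < d) (hq : q ≠ 0)
    (h : 27 * d * t ^ 2 = 4 * (4 - p ^ 2) * q ^ 2) : p = 2 ∨ p = -2 := by
  have hle : |p| ≤ 2 := by
    rw [← abs_two (α := ℤ), ← sq_le_sq]
    nlinarith [sq_nonneg t, sq_pos_of_ne_zero hq]
  have ht (hp : 4 - p ^ 2 ≠ 0) : t ≠ 0 := by
    rintro rfl
    simp [hq, hp] at h
  have hp : p = 0 ∨ p ^ 2 = 1 ∨ p = 2 ∨ p = -2 := by
    obtain ⟨hlow, hhigh⟩ := abs_le.1 hle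
    interval_cases p <;> decide
  rcases hp with rfl | hp | hp
  · have hsq : IsSquare (3 * d) :=
      isSquare_of_mul_sq_eq_sq (s := 4 * q) (t := 3 * t) (by simpa using ht) (by linarith)
    linarith [hfund.eq_twelve_of_isSquare_three_mul hsq]
  · rw [hp] at h
    refine absurd (isSquare_of_mul_sq_eq_sq (s := 2 * q) (t := 3 * t) ?_ ?_) hfund.not_isSquare
    · simpa [hp] using ht
    · linarith
  · exact hp

theorem IsFundamentalDiscriminant.eq_or_eq_neg_of_mixed_eq {d n n' i i' q p : ℤ}
    (hfund : IsFundamentalDiscriminant d) (hd : 12 < d) (hq : q ≠ 0)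
    (h : 27 * n ^ 2 + d * i ^ 2 = 4 * q ^ 3) (h' : 27 * n' ^ 2 + d * i' ^ 2 = 4 * q ^ 3)
    (hmix : 27 * (n * n') + d * (i * i') = 2 * p * q ^ 3) : n' = n ∨ n' = -n := by
  have hbrahmagupta : 27 * d * (n * i' - n' * i) ^ 2 = 4 * (4 - p ^ 2) * (q ^ 3) ^ 2 := by
    linear_combination (27 * n' ^ 2 + d * i' ^ 2) * h + 4 * q ^ 3 * h' -
      (27 * (n * n') + d * (i * i') + 2 * p * q ^ 3) * hmix
  have hd0 : 0 ≤ d := by linarith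
  rcases hfund.eq_two_or_eq_neg_two_of_mul_sq_eq hd (pow_ne_zero 3 hq) hbrahmagupta with
    rfl | rfl
  · refine .inl (sub_eq_zero.1 (eq_zero_of_mul_sq_add_mul_sq_eq_zero (c := 27) (d := d)
      (b := i' - i) (by norm_num) hd0 ?_))
    linear_combination h + h' - 2 * hmix
  · refine .inr (eq_neg_of_add_eq_zero_left (eq_zero_of_mul_sq_add_mul_sq_eq_zero (c := 27)
      (d := d) (b := i' + i) (by norm_num) hd0 ?_))
    linear_combination h + h' + 2 * hmix

end Integrality

section MixedForm

open Complex ComplexConjugate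

theorem exists_im_eq_sqrt_mul {w : ℂ} {d n i q : ℤ} (hd : 0 ≤ d)
    (h : 27 * n ^ 2 + d * i ^ 2 = 4 * q ^ 3) (hre : w.re = 27 / 2 * n)
    (hnorm : normSq w = 27 * q ^ 3) :
    ∃ j : ℤ, 27 * n ^ 2 + d * j ^ 2 = 4 * q ^ 3 ∧ w.im = √(27 * d) / 2 * j := by
  have hd' : √(27 * d) ^ 2 = (27 * d : ℝ) := Real.sq_sqrt (by positivity)
  have hR : (27 * n ^ 2 + d * i ^ 2 : ℝ) = 4 * q ^ 3 := by exact_mod_cast h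
  have him : w.im ^ 2 = (√(27 * d) / 2 * i) ^ 2 := by
    rw [normSq_apply, hre] at hnorm
    linear_combination hnorm - 27 / 4 * hR - i ^ 2 / 4 * hd'
  rcases sq_eq_sq_iff_eq_or_eq_neg.1 him with him | him
  · exact ⟨i, h, him⟩
  · exact ⟨-i, by rw [neg_sq, h], by rw [him, Int.cast_neg, mul_neg]⟩

theorem exists_mixed_eq {w w' κ : ℂ} {d n n' i i' q : ℤ} (hd : 0 ≤ d)
    (h : 27 * n ^ 2 + d * i ^ 2 = 4 * q ^ 3) (h' : 27 * n' ^ 2 + d * i' ^ 2 = 4 * q ^ 3)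
    (hre : w.re = 27 / 2 * n) (hre' : w'.re = 27 / 2 * n') (hnorm : normSq w = 27 * q ^ 3)
    (hκ : normSq κ = 1) (hw : w' = κ * w) :
    ∃ j j' : ℤ, 27 * n ^ 2 + d * j ^ 2 = 4 * q ^ 3 ∧ 27 * n' ^ 2 + d * j' ^ 2 = 4 * q ^ 3 ∧
      ((27 * (n * n') + d * (j * j') : ℤ) : ℝ) = 4 * κ.re * q ^ 3 := by
  have hnorm' : normSq w' = 27 * q ^ 3 := by rw [hw, map_mul, hκ, one_mul, hnorm]
  obtain ⟨j, hj, him⟩ := exists_im_eq_sqrt_mul hd h hre hnorm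
  obtain ⟨j', hj', him'⟩ := exists_im_eq_sqrt_mul hd h' hre' hnorm'
  refine ⟨j, j', hj, hj', ?_⟩
  have hprod : w'.re * w.re + w'.im * w.im = κ.re * normSq w := by
    rw [hw, normSq_apply, mul_re, mul_im]
    ring
  rw [hre, hre', him, him', hnorm] at hprod
  have hd' : √(27 * d) ^ 2 = (27 * d : ℝ) := Real.sq_sqrt (by positivity)
  push_cast
  linear_combination 4 / 27 * hprod - j * j' / 27 * hd'

end MixedForm

section Isometry

open Module NumberField Complex ComplexConjugate

variable {K L : Type*} [Field K] [Field L]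

theorem halfTrace_isometryEquiv (φ : (traceZeroForm K).IsometryEquiv (traceZeroForm L))
    (x : traceZero K) : halfTrace (φ x) = halfTrace x := by
  rw [halfTrace, halfTrace, φ.map_app]

variable [NumberField K] [NumberField L] [IsTotallyReal K] [IsTotallyReal L]
  (hK : finrank ℚ K = 3) (hL : finrank ℚ L = 3)

include hK hL

theorem exists_forall_mixed_eq (hKL : discr L = discr K)
    (φ : (traceZeroForm K).IsometryEquiv (traceZeroForm L)) :
    ∃ a : ℝ, ∀ x : traceZero K, ∃ i i' : ℤ,
      27 * Algebra.norm ℤ (x : 𝓞 K) ^ 2 + discr K * i ^ 2 = 4 * halfTrace x ^ 3 ∧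
      27 * Algebra.norm ℤ (φ x : 𝓞 L) ^ 2 + discr K * i' ^ 2 = 4 * halfTrace x ^ 3 ∧
      ((27 * (Algebra.norm ℤ (x : 𝓞 K) * Algebra.norm ℤ (φ x : 𝓞 L)) + discr K * (i * i') : ℤ)
        : ℝ) = 4 * a * halfTrace x ^ 3 := by
  obtain ⟨f, hf⟩ := exists_resolvent hK
  obtain ⟨f', hf'⟩ := exists_resolvent hL
  let g : traceZero K →+ ℂ := f'.comp (φ.toLinearEquiv : traceZero K →+ traceZero L)
  have hg (x : traceZero K) : g x = f' (φ x) := rfl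
  have hnorm (x : traceZero K) : normSq (g x) = normSq (f x) := by
    rw [hg, (hf' _).1, (hf x).1, φ.map_app]
  obtain ⟨k, hk, hkf⟩ := exists_normSq_eq_one_of_normSq_eq hnorm
  refine ⟨(k ^ 3).re, fun x ↦ ?_⟩
  obtain ⟨w, hre, hnormw, hw⟩ : ∃ w : ℂ, w.re = 27 / 2 * Algebra.norm ℤ (x : 𝓞 K) ∧
      normSq w = 27 * halfTrace x ^ 3 ∧ g x ^ 3 = k ^ 3 * w := by
    have hnormf : normSq (f x ^ 3) = 27 * halfTrace x ^ 3 := by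
      rw [map_pow, (hf x).1, traceZeroForm_eq_two_mul_halfTrace hK]
      push_cast
      ring
    rcases hkf with hkf | hkf
    · exact ⟨f x ^ 3, (hf x).2, hnormf, by rw [hkf, mul_pow]⟩
    · exact ⟨conj (f x ^ 3), by rw [conj_re, (hf x).2], by rw [normSq_conj, hnormf],
        by rw [hkf, mul_pow, map_pow]⟩
  obtain ⟨i, hi⟩ := exists_norm_sq_add_discr_mul_sq_eq_halfTrace hK x
  obtain ⟨i', hi'⟩ := exists_norm_sq_add_discr_mul_sq_eq_halfTrace hL (φ x)
  rw [hKL, halfTrace_isometryEquiv] at hi'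
  have hdiscr : 0 ≤ discr K := by linarith [twelve_lt_discr hK]
  exact exists_mixed_eq hdiscr hi hi' hre (hf' (φ x)).2 hnormw (by rw [map_pow, hk, one_pow]) hw

theorem norm_isometryEquiv_eq_or_eq_neg (hfund : IsFundamentalDiscriminant (discr K))
    (hKL : discr L = discr K) (φ : (traceZeroForm K).IsometryEquiv (traceZeroForm L))
    {x : traceZero K} (hx : halfTrace x ≠ 0) :
    Algebra.norm ℤ (φ x : 𝓞 L) = Algebra.norm ℤ (x : 𝓞 K) ∨
      Algebra.norm ℤ (φ x : 𝓞 L) = -Algebra.norm ℤ (x : 𝓞 K) := by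
  obtain ⟨a, ha⟩ := exists_forall_mixed_eq hK hL hKL φ
  obtain ⟨g, q, hq, hspan⟩ := exists_eq_mul_and_span_range_eq_top
    (q := halfTrace (K := K)) (Function.ne_iff.2 ⟨x, hx⟩)
  have hg : g ∣ 3 := dvd_three_of_forall_dvd_halfTrace hK hfund fun y ↦ ⟨q y, hq y⟩
  have hg0 : (g : ℝ) ≠ 0 := by
    rintro h0
    exact hx (by rw [hq, Int.cast_eq_zero.1 h0, zero_mul])
  obtain ⟨p, hp⟩ : ∃ p : ℤ, 2 * a = p := by
    refine exists_intCast_eq_of_span_eq_top hspan (n := 3) fun y ↦ ?_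
    obtain ⟨i, i', hi, hi', hmix⟩ := ha y
    rw [hq] at hi hi'
    obtain ⟨m, hm⟩ := two_mul_pow_three_dvd_mixed hg hi hi'
    refine ⟨m, mul_left_cancel₀ (mul_ne_zero two_ne_zero (pow_ne_zero 3 hg0)) ?_⟩
    rw [hm, hq] at hmix
    push_cast at hmix
    linear_combination -hmix
  obtain ⟨i, i', hi, hi', hmix⟩ := ha x
  refine hfund.eq_or_eq_neg_of_mixed_eq (p := p) (twelve_lt_discr hK) hx hi hi' ?_
  rw [show 4 * a = 2 * p by rw [← hp]; ring] at hmix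
  exact_mod_cast hmix

theorem nonempty_ringEquiv_of_equivalent (hfund : IsFundamentalDiscriminant (discr K))
    (hKL : discr L = discr K) (h : (traceZeroForm K).Equivalent (traceZeroForm L)) :
    Nonempty (K ≃+* L) := by
  obtain ⟨φ⟩ := h
  let b := finBasisOfFinrankEq ℤ (traceZero K) (finrank_traceZero hK hfund.not_nine_dvd)
  have hb : b 0 ≠ 0 := b.ne_zero 0
  have hφb : φ (b 0) ≠ 0 := (map_ne_zero_iff φ.toLinearEquiv φ.toLinearEquiv.injective).2 hb
  have hhalf : halfTrace (b 0) ≠ 0 := by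
    have := posDef_traceZeroForm _ hb
    rw [traceZeroForm_eq_two_mul_halfTrace hK] at this
    linarith
  have hx3 := traceZero_pow_three hK (b 0)
  have hy3 := traceZero_pow_three hL (φ (b 0))
  rw [halfTrace_isometryEquiv] at hy3
  rcases norm_isometryEquiv_eq_or_eq_neg hK hL hfund hKL φ hhalf with hnorm | hnorm
  · rw [hnorm] at hy3
    exact nonempty_ringEquiv_of_pow_three_eq hK hL hb hφb hx3 hy3
  · refine nonempty_ringEquiv_of_pow_three_eq hK hL hb (neg_ne_zero.2 hφb) hx3 ?_
    rw [hnorm, map_neg] at hy3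
    rw [Submodule.coe_neg, Odd.neg_pow (by decide), hy3, smul_neg]
    abel

end Isometry

section Counts

open Module NumberField

variable {K L : Type*} [Field K] [NumberField K] [Field L] [NumberField L]

theorem natCard_traceZeroForm_eq (n : ℤ) :
    Nat.card {x : traceZero K // traceZeroForm K x = n} =
      Nat.card {x : 𝓞 K // Algebra.trace ℚ K (x : K) = 0 ∧
        Algebra.trace ℚ K ((x : K) ^ 2) = (n : ℚ)} := by
  have hiff (x : 𝓞 K) : Algebra.trace ℚ K (x : K) = 0 ∧ Algebra.trace ℚ K ((x : K) ^ 2) = (n : ℚ) ↔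
      x ∈ traceZero K ∧ Algebra.trace ℤ (𝓞 K) (x ^ 2) = n := by
    rw [← map_pow, ← Algebra.coe_trace_int, ← Algebra.coe_trace_int, Int.cast_eq_zero,
      Int.cast_inj, LinearMap.mem_ker]
  refine Nat.card_congr (((Equiv.subtypeEquivRight fun x ↦ ?_).trans
    (Equiv.subtypeSubtypeEquivSubtypeInter (· ∈ traceZero K)
      fun x ↦ Algebra.trace ℤ (𝓞 K) (x ^ 2) = n)).trans
    (Equiv.subtypeEquivRight hiff).symm)
  rw [traceZeroForm_apply]

theorem equivalent_traceZeroForm_of_natCard_eq [IsTotallyReal K] [IsTotallyReal L]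
    (hK : finrank ℚ K = 3) (hL : finrank ℚ L = 3) (h9 : ¬ 9 ∣ discr K) (hKL : discr L = discr K)
    (hcard : ∀ n, Nat.card {x // traceZeroForm K x = n} = Nat.card {y // traceZeroForm L y = n}) :
    (traceZeroForm K).Equivalent (traceZeroForm L) := by
  have h9' : ¬ 9 ∣ discr L := hKL ▸ h9
  let b := finBasisOfFinrankEq ℤ (traceZero K) (finrank_traceZero hK h9)
  let b' := finBasisOfFinrankEq ℤ (traceZero L) (finrank_traceZero hL h9')
  refine equivalent_of_det_eq_of_natCard_eq posDef_traceZeroForm posDef_traceZeroForm b b' ?_ hcard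
  rw [det_traceZeroForm hK h9, det_traceZeroForm hL h9', hKL]

end Counts

/-- Two totally real cubic fields of the same fundamental discriminant whose trace-zero
integral trace forms represent every integer the same number of times are isomorphic. -/
theorem isomorphic_of_same_representation_numbers
    (K L : Type*) [Field K] [NumberField K] [Field L] [NumberField L]
    (hdegK : Module.finrank ℚ K = 3) (hdegL : Module.finrank ℚ L = 3)
    (htrK : ∀ (φ : K →+* ℂ) (x : K), (φ x).im = 0)
    (htrL : ∀ (φ : L →+* ℂ) (x : L), (φ x).im = 0)
    (d : ℤ) (hfund : IsFundamentalDiscriminant d)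
    (hdK : NumberField.discr K = d) (hdL : NumberField.discr L = d)
    (hcount : ∀ n : ℤ,
      Nat.card {x : NumberField.RingOfIntegers K //
          Algebra.trace ℚ K (x : K) = 0 ∧ Algebra.trace ℚ K ((x : K) ^ 2) = (n : ℚ)} =
        Nat.card {y : NumberField.RingOfIntegers L //
          Algebra.trace ℚ L (y : L) = 0 ∧ Algebra.trace ℚ L ((y : L) ^ 2) = (n : ℚ)}) :
    Nonempty (K ≃+* L) := by
  subst hdK
  have := isTotallyReal_of_forall_im_eq_zero htrK
  have := isTotallyReal_of_forall_im_eq_zero htrL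
  refine nonempty_ringEquiv_of_equivalent hdegK hdegL hfund hdL
    (equivalent_traceZeroForm_of_natCard_eq hdegK hdegL hfund.not_nine_dvd hdL fun n ↦ ?_)
  rw [natCard_traceZeroForm_eq, natCard_traceZeroForm_eq, hcount]
end
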